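/- arXiv:2407.21755 — 2 statements merged into one kernel-verified Lean document; each statement's English description precedes it below -/
import Mathlib

section
/- Let n and k be positive integers with n ≡ k (mod 2k) and n ≥ 5k. Then both polynomials MPE_{n,1}^{k,+}(t) = ∑_{π ∈ MP_{n,1}^k, sgn(π)=1} t^{exc(π)} and MPE_{n,1}^{k,-}(t) = ∑_{π ∈ MP_{n,1}^k, sgn(π)=-1} t^{exc(π)} are gamma-positive with center of symmetry (n-k)/2. -/
/-!
Write `n = m * k` with `m = 2 * q + 1 ≥ 5`. A permutation preserving residues mod `k` is a `k`-tuple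
of permutations of `m` letters, one per residue class; the excedance numbers add up and the signs
multiply. So with `A = ∑ t ^ exc` and `D = ∑ sgn * t ^ exc` over the symmetric group on `m` letters,
the two polynomials in question are `(A ^ k ± D ^ k) / 2`.

Let the *cone* of degree `d` be the set of nonnegative combinations of the polynomials
`t ^ i * (1 + t) ^ (2 * j)`, `i + j = d`. Cones multiply, so by induction on `k` it suffices that
`A ± D` lies in the cone of degree `q`. Inserting one letter gives `A_{n+1} = (1 + n t) A_n +
t (1 - t) (d/dt) A_n` (`eulerian_succ` for `ε = 1`), and the same recurrence with signs gives
`D = (1 - t) ^ (m - 1) = ((1 + t) ^ 2 - 4 t) ^ q` (`eulerian_neg_one`). With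
`P = ((1 + t) ^ 2 + 4 t) ^ q` the polynomials `P ± D` are in the cone, so it remains to see that
`A - P` is. For `q = 2` this is the computation `A_5 - P = 14 t (1 + t) ^ 2`; applying the recurrence
twice dominates multiplication by `(1 + t) ^ 2 + 4 t` on the cone (`cone_step_sub`), whence the claim
for all `q ≥ 2`.
-/

open Polynomial Finset

/-- Number of excedances of a permutation of `Fin n` (indices where `π i > i`). -/
def exc {n : ℕ} (π : Equiv.Perm (Fin n)) : ℕ :=
  (Finset.univ.filter fun i => π i > i).card

/-- Mod-k-alternating permutations of size `n` starting with remainder `r` (mod k):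
permutations with `π i - i ≡ r - 1 (mod k)` for all `i`. -/
def MP (n k r : ℕ) : Finset (Equiv.Perm (Fin n)) :=
  Finset.univ.filter fun π => ∀ i : Fin n, ((π i : ℤ) - (i : ℤ)) ≡ ((r : ℤ) - 1) [ZMOD (k : ℤ)]

/-- A polynomial `f ∈ ℚ[t]` is gamma-positive with center of symmetry `c` if there are
nonnegative integers `r ≤ N` with `N + r = 2c` and nonnegative rationals `γ i` with
`f = ∑_{i=0}^{⌊(N-r)/2⌋} γ i * t^(r+i) * (1+t)^(N-r-2i)`. -/
def GammaPositive (f : ℚ[X]) (c : ℚ) : Prop :=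
  ∃ N r : ℕ, r ≤ N ∧ (N : ℚ) + (r : ℚ) = 2 * c ∧
    ∃ γ : ℕ → ℚ, (∀ i, 0 ≤ γ i) ∧
      f = ∑ i ∈ Finset.range ((N - r) / 2 + 1), C (γ i) * X ^ (r + i) * (1 + X) ^ (N - r - 2 * i)

/-! ### Excedance polynomials of the symmetric group -/

/-- The excedance polynomial of the symmetric group on `n` letters, weighted by `χ ∘ sgn`, where
`χ` is given by the image `ε` of `-1`: the Eulerian polynomial for `ε = 1`, its signed version for
`ε = -1`. -/
noncomputable def eulerian (ε : ℤˣ) (n : ℕ) : ℚ[X] :=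
  ∑ π : Equiv.Perm (Fin n), (if Equiv.Perm.sign π = 1 then 1 else ((ε : ℤ) : ℚ[X])) * X ^ exc π

lemma exc_decomposeFin_zero {n : ℕ} (e : Equiv.Perm (Fin n)) :
    exc (Equiv.Perm.decomposeFin.symm (0, e)) = exc e := by
  unfold exc
  simp only [Finset.card_filter, Fin.sum_univ_succ]
  simp

/-- Inserting a new smallest letter whose image is `e x + 1` creates an excedance at the new letter
and destroys the one at `x`, if there was one. -/
lemma exc_decomposeFin_succ {n : ℕ} (e : Equiv.Perm (Fin n)) (x : Fin n) :
    exc (Equiv.Perm.decomposeFin.symm ((e x).succ, e)) =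
      if e x > x then exc e else exc e + 1 := by
  unfold exc
  simp only [Finset.card_filter, Fin.sum_univ_succ]
  rw [← Finset.add_sum_erase _ _ (Finset.mem_univ x),
    ← Finset.add_sum_erase (a := x) _ (fun i => if e i > i then 1 else 0) (Finset.mem_univ x)]
  have h : ∑ i ∈ Finset.univ.erase x, (if (Equiv.Perm.decomposeFin.symm ((e x).succ, e)) i.succ
      > i.succ then 1 else 0) = ∑ i ∈ Finset.univ.erase x, (if e i > i then 1 else 0) := by
    refine Finset.sum_congr rfl fun i hi => ?_
    have hne : e i ≠ e x := fun h => (Finset.ne_of_mem_erase hi) (e.injective h)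
    rw [Equiv.Perm.decomposeFin_symm_apply_succ, Equiv.swap_apply_of_ne_of_ne (Fin.succ_ne_zero _)
      (by simpa using hne)]
    simp
  rw [h]
  simp only [Equiv.Perm.decomposeFin_symm_apply_succ, Equiv.Perm.decomposeFin_symm_apply_zero,
    Equiv.swap_apply_right]
  by_cases hx : e x > x
  · simp [hx]
  · simp [hx]
    omega

lemma sum_decomposeFin {n : ℕ} (e : Equiv.Perm (Fin n)) :
    (∑ p : Fin n, (X : ℚ[X]) ^ exc (Equiv.Perm.decomposeFin.symm (p.succ, e))) =
      (n : ℚ[X]) * X * X ^ exc e + X * (1 - X) * derivative (X ^ exc e) := by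
  rw [← Equiv.sum_comp e]
  simp only [exc_decomposeFin_succ]
  have h : ∀ x, (X : ℚ[X]) ^ (if e x > x then exc e else exc e + 1) =
      X * X ^ exc e + (if e x > x then 1 else 0) * ((1 - X) * X ^ exc e) := by
    intro x
    split_ifs <;> ring
  have h2 : X * derivative ((X : ℚ[X]) ^ exc e) = (exc e : ℚ[X]) * X ^ exc e := by
    rcases exc e with _ | m
    · simp
    · simp only [derivative_X_pow, Nat.add_sub_cancel, C_eq_natCast]; ring
  have h3 : ∑ x, (if e x > x then (1 : ℚ[X]) else 0) = exc e := by
    simp [exc]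
  simp only [h]
  rw [Finset.sum_add_distrib, ← Finset.sum_mul, ← Finset.sum_mul, h3]
  simp only [Finset.sum_const, Finset.card_univ, Fintype.card_fin, nsmul_eq_mul]
  linear_combination (X - 1) * h2

/-- The recurrence `F_{n+1} = F_n + ε (n t F_n + t (1 - t) (d/dt) F_n)`. -/
lemma eulerian_succ (ε : ℤˣ) (n : ℕ) :
    eulerian ε (n + 1) = eulerian ε n +
      ((ε : ℤ) : ℚ[X]) * ((n : ℚ[X]) * X * eulerian ε n + X * (1 - X) * derivative (eulerian ε n)) := by
  unfold eulerian
  rw [← Equiv.sum_comp Equiv.Perm.decomposeFin.symm, Fintype.sum_prod_type_right, derivative_sum,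
    Finset.mul_sum, Finset.mul_sum, ← Finset.sum_add_distrib, Finset.mul_sum,
    ← Finset.sum_add_distrib]
  refine Finset.sum_congr rfl fun e _ => ?_
  have hε : ((ε : ℤ) : ℚ[X]) * ((ε : ℤ) : ℚ[X]) = 1 := by
    rcases Int.units_eq_one_or ε with rfl | rfl <;> simp
  have hs : ∀ p : Fin n, (if Equiv.Perm.sign (Equiv.Perm.decomposeFin.symm (p.succ, e)) = 1
      then 1 else ((ε : ℤ) : ℚ[X])) =
      ((ε : ℤ) : ℚ[X]) * (if Equiv.Perm.sign e = 1 then 1 else ((ε : ℤ) : ℚ[X])) := by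
    intro p
    rw [Equiv.Perm.decomposeFin.symm_sign, if_neg (Fin.succ_ne_zero p)]
    rcases Int.units_eq_one_or (Equiv.Perm.sign e) with h | h <;> simp [h, hε]
  rw [Fin.sum_univ_succ, exc_decomposeFin_zero, Equiv.Perm.decomposeFin.symm_sign]
  simp only [hs, ← Finset.mul_sum, sum_decomposeFin, if_true, one_mul]
  have hd : derivative ((if Equiv.Perm.sign e = 1 then 1 else ((ε : ℤ) : ℚ[X])) * X ^ exc e) =
      (if Equiv.Perm.sign e = 1 then 1 else ((ε : ℤ) : ℚ[X])) * derivative (X ^ exc e) := by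
    split_ifs <;> simp
  rw [hd]
  ring

lemma eulerian_one (ε : ℤˣ) : eulerian ε 1 = 1 := by
  simp [eulerian, exc]

lemma eulerian_neg_one (n : ℕ) : eulerian (-1) (n + 1) = (1 - X) ^ n := by
  induction n with
  | zero => simp [eulerian_one]
  | succ n ih =>
    rw [eulerian_succ, ih]
    rcases n with _ | n
    · simp
      ring
    · simp only [derivative_pow_succ, derivative_sub, derivative_one, derivative_X, Units.val_neg,
        Units.val_one, Int.cast_neg, Int.cast_one, C_eq_natCast, map_add, map_one]
      push_cast
      ring

/-- The operator taking the Eulerian polynomial on `n` letters to the one on `n + 1` letters. -/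
noncomputable def eulerStep (n : ℕ) : ℚ[X] →ₗ[ℚ] ℚ[X] :=
  LinearMap.mulLeft ℚ (1 + (n : ℚ[X]) * X) + LinearMap.mulLeft ℚ (X * (1 - X)) ∘ₗ derivative

lemma eulerStep_apply (n : ℕ) (f : ℚ[X]) :
    eulerStep n f = (1 + (n : ℚ[X]) * X) * f + X * (1 - X) * derivative f := rfl

lemma eulerian_one_succ (n : ℕ) : eulerian 1 (n + 1) = eulerStep n (eulerian 1 n) := by
  rw [eulerian_succ, eulerStep_apply]
  simp
  ring

lemma eulerStep_basis (i p n : ℕ) (hn : n = p + 1 + 2 * i) :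
    eulerStep n (X ^ i * (1 + X) ^ p) =
      ((i : ℚ) + 1) • (X ^ i * (1 + X) ^ (p + 1)) +
        (2 * (p : ℚ)) • (X ^ (i + 1) * (1 + X) ^ (p - 1)) := by
  have h2 : X * derivative ((X : ℚ[X]) ^ i) = (i : ℚ[X]) * X ^ i := by
    rcases i with _ | m
    · simp
    · simp only [derivative_X_pow, Nat.add_sub_cancel, C_eq_natCast]; ring
  have h3 : derivative ((1 + X : ℚ[X]) ^ p) = (p : ℚ[X]) * (1 + X) ^ (p - 1) := by
    simp [derivative_pow]
  have h4 : (p : ℚ[X]) * (1 + X) ^ p = (p : ℚ[X]) * ((1 + X) ^ (p - 1) * (1 + X)) := by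
    rcases p with _ | p
    · simp
    · simp [pow_succ]
  rw [eulerStep_apply, derivative_mul, h3]
  simp only [smul_eq_C_mul, map_add, map_mul, map_one, map_natCast, map_ofNat, hn]
  push_cast
  linear_combination (1 - X) * (1 + X) ^ p * h2 + X ^ (i + 1) * h4

/-! ### The gamma-positive cone -/

/-- The gamma-positive polynomials with center of symmetry `d` and coefficients supported in
`[0, 2 * d]`. -/
noncomputable def cone (d : ℕ) : AddSubmonoid ℚ[X] :=
  AddSubmonoid.closure {f | ∃ (c : ℚ) (i j : ℕ), 0 ≤ c ∧ i + j = d ∧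
    f = c • (X ^ i * (1 + X) ^ (2 * j))}

lemma cone_basis {d : ℕ} (c : ℚ) (i j : ℕ) (hc : 0 ≤ c) (h : i + j = d) :
    c • (X ^ i * (1 + X) ^ (2 * j)) ∈ cone d :=
  AddSubmonoid.subset_closure ⟨c, i, j, hc, h, rfl⟩

lemma cone_smul {d : ℕ} {f : ℚ[X]} (c : ℚ) (hc : 0 ≤ c) (hf : f ∈ cone d) : c • f ∈ cone d := by
  induction hf using AddSubmonoid.closure_induction with
  | mem x hx =>
    obtain ⟨b, i, j, hb, h, rfl⟩ := hx
    rw [smul_smul]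
    exact cone_basis _ _ _ (mul_nonneg hc hb) h
  | zero => simp
  | add x y _ _ hx hy => rw [smul_add]; exact add_mem hx hy

lemma cone_mul {d e : ℕ} {f g : ℚ[X]} (hf : f ∈ cone d) (hg : g ∈ cone e) :
    f * g ∈ cone (d + e) := by
  induction hf using AddSubmonoid.closure_induction with
  | zero => simp
  | add x y _ _ hx hy => rw [add_mul]; exact add_mem hx hy
  | mem x hx =>
    obtain ⟨b, i, j, hb, h, rfl⟩ := hx
    induction hg using AddSubmonoid.closure_induction with
    | zero => simp
    | add x y _ _ hx hy => rw [mul_add]; exact add_mem hx hy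
    | mem y hy =>
      obtain ⟨c, i', j', hc, h', rfl⟩ := hy
      have := cone_basis (d := d + e) (b * c) (i + i') (j + j') (mul_nonneg hb hc) (by omega)
      convert this using 1
      rw [smul_mul_smul_comm]
      congr 1
      ring

lemma cone_gammaPositive {d : ℕ} {f : ℚ[X]} (hf : f ∈ cone d) : GammaPositive f d := by
  refine ⟨2 * d, 0, by omega, by push_cast; ring, ?_⟩
  have hd : (2 * d - 0) / 2 + 1 = d + 1 := by omega
  rw [hd]
  induction hf using AddSubmonoid.closure_induction with
  | zero => exact ⟨0, by simp, by simp⟩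
  | add x y _ _ hx hy =>
    obtain ⟨γ, h0, h1⟩ := hx
    obtain ⟨δ, h2, h3⟩ := hy
    refine ⟨γ + δ, fun i => add_nonneg (h0 i) (h2 i), ?_⟩
    rw [h1, h3, ← Finset.sum_add_distrib]
    refine Finset.sum_congr rfl fun i _ => ?_
    simp only [Pi.add_apply, map_add]
    ring
  | mem x hx =>
    obtain ⟨c, i, j, hc, h, rfl⟩ := hx
    refine ⟨Pi.single i c, fun l => ?_, ?_⟩
    · by_cases hl : l = i
      · subst hl; simpa
      · simp [hl]
    · rw [Finset.sum_eq_single i]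
      · rw [Pi.single_eq_same, smul_eq_C_mul, show 2 * d - 0 - 2 * i = 2 * j by omega]
        ring
      · intro l _ hl
        simp [hl]
      · intro hi
        simp at hi
        omega

/-- In terms of the basis, `t ^ i (1 + t) ^ (2 j)` is sent by the difference of the two operators to
a combination with coefficients `(i + 1) ^ 2 - 1`, `(i + 1) (4 j + 2) + 4 j (i + 2) - 4` and
`8 j (2 j - 1)`; the middle one is nonnegative as `i + j ≥ 1`. -/
lemma cone_step_sub {d : ℕ} (hd : 1 ≤ d) {f : ℚ[X]} (hf : f ∈ cone d) :
    eulerStep (2 * d + 2) (eulerStep (2 * d + 1) f) - ((1 + X) ^ 2 + 4 * X) * f ∈ cone (d + 1) := by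
  induction hf using AddSubmonoid.closure_induction with
  | zero => simp
  | add x y _ _ hx hy =>
    convert add_mem hx hy using 1
    simp only [map_add]
    ring
  | mem x hx =>
    obtain ⟨c, i, j, hc, h, rfl⟩ := hx
    rw [map_smul, map_smul, mul_smul_comm, ← smul_sub]
    apply cone_smul _ hc
    rw [eulerStep_basis i (2 * j) _ (by omega), map_add, map_smul, map_smul,
      eulerStep_basis i (2 * j + 1) _ (by omega)]
    rcases j with _ | j
    · have hi : (1 : ℚ) ≤ i := by exact_mod_cast (by omega : 1 ≤ i)
      have h1 := cone_basis (d := d + 1) (((i : ℚ) + 1) ^ 2 - 1) i 1 (by nlinarith) (by omega)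
      have h2 := cone_basis (d := d + 1) (((i : ℚ) + 1) * 2 - 4) (i + 1) 0 (by linarith) (by omega)
      convert add_mem h1 h2 using 1
      simp only [smul_eq_C_mul, map_add, map_sub, map_mul, map_pow, map_one, map_natCast, map_ofNat]
      simp
      ring
    · rw [eulerStep_basis (i + 1) (2 * (j + 1) - 1) _ (by omega)]
      have h1 := cone_basis (d := d + 1) (((i : ℚ) + 1) ^ 2 - 1) i (j + 2)
        (by have : (0 : ℚ) ≤ i := by positivity
            nlinarith) (by omega)
      have h2 := cone_basis (d := d + 1)
        (((i : ℚ) + 1) * (4 * j + 6) + 4 * (j + 1) * (i + 2) - 4) (i + 1) (j + 1)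
        (by have : (0 : ℚ) ≤ i := by positivity
            have : (0 : ℚ) ≤ j := by positivity
            have : (0 : ℚ) ≤ i * j := by positivity
            nlinarith) (by omega)
      have h3 := cone_basis (d := d + 1) (8 * ((j : ℚ) + 1) * (2 * j + 1)) (i + 2) j
        (by positivity) (by omega)
      convert add_mem (add_mem h1 h2) h3 using 1
      have e1 : 2 * (j + 1) - 1 = 2 * j + 1 := by omega
      simp only [smul_eq_C_mul, map_add, map_sub, map_mul, map_pow, map_one, map_natCast,
        map_ofNat, e1, Nat.add_sub_cancel]
      push_cast
      ring

lemma cone_one_sq : ((1 + X) ^ 2 : ℚ[X]) ∈ cone 1 := by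
  simpa using cone_basis (d := 1) 1 0 1 (by norm_num) rfl

lemma cone_one_X : (4 * X : ℚ[X]) ∈ cone 1 := by
  simpa [smul_eq_C_mul, map_ofNat] using cone_basis (d := 1) 4 1 0 (by norm_num) rfl

lemma eulerian_sub_mem (q : ℕ) :
    eulerian 1 (2 * (q + 2) + 1) - ((1 + X) ^ 2 + 4 * X) ^ (q + 2) ∈ cone (q + 2) := by
  induction q with
  | zero =>
    have h := cone_basis (d := 2) 14 1 1 (by norm_num) rfl
    convert h using 1
    rw [show 2 * (0 + 2) + 1 = 4 + 1 from rfl, eulerian_one_succ 4, eulerian_one_succ 3,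
      eulerian_one_succ 2, eulerian_one_succ 1, eulerian_one]
    simp [eulerStep_apply, smul_eq_C_mul, map_ofNat]
    ring
  | succ q ih =>
    have hs := add_mem cone_one_sq cone_one_X
    have hP : ((1 + X : ℚ[X]) ^ 2 + 4 * X) ^ (q + 2) ∈ cone (q + 2) := by
      induction q + 2 with
      | zero => simpa using cone_basis (d := 0) 1 0 0 (by norm_num) rfl
      | succ r ihr => rw [pow_succ]; exact cone_mul ihr hs
    have hA : eulerian 1 (2 * (q + 2) + 1) ∈ cone (q + 2) := by
      simpa using add_mem ih hP
    have h1 := cone_step_sub (by omega) hA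
    have h2 := cone_mul ih hs
    convert add_mem h1 h2 using 1
    rw [show 2 * (q + 1 + 2) + 1 = (2 * (q + 2) + 2) + 1 by ring, eulerian_one_succ,
      eulerian_one_succ]
    ring

/-- If `a ± b` are in the cone of degree `d`, then `a ^ k ± b ^ k` are in that of degree `d * k`. -/
lemma cone_pow_add_sub {d : ℕ} {a b : ℚ[X]} (h1 : a + b ∈ cone d) (h2 : a - b ∈ cone d) (k : ℕ) :
    a ^ k + b ^ k ∈ cone (d * k) ∧ a ^ k - b ^ k ∈ cone (d * k) := by
  induction k with
  | zero =>
    have := cone_basis (d := d * 0) 2 0 0 (by norm_num) rfl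
    refine ⟨?_, by simp⟩
    convert this using 1
    simp [smul_eq_C_mul, map_ofNat]
    norm_num
  | succ k ih =>
    obtain ⟨i1, i2⟩ := ih
    rw [Nat.mul_succ]
    have hC : (C (1 / 2 : ℚ) : ℚ[X]) * 2 = 1 := by
      rw [show (2 : ℚ[X]) = C 2 from rfl, ← C_mul]; norm_num
    constructor
    · convert cone_smul (1 / 2) (by norm_num) (add_mem (cone_mul i1 h1) (cone_mul i2 h2)) using 1
      rw [smul_eq_C_mul]
      linear_combination (-(a ^ (k + 1) + b ^ (k + 1))) * hC
    · convert cone_smul (1 / 2) (by norm_num) (add_mem (cone_mul i1 h2) (cone_mul i2 h1)) using 1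
      rw [smul_eq_C_mul]
      linear_combination (-(a ^ (k + 1) - b ^ (k + 1))) * hC

lemma eulerian_add_sub_mem (q : ℕ) :
    eulerian 1 (2 * (q + 2) + 1) + eulerian (-1) (2 * (q + 2) + 1) ∈ cone (q + 2) ∧
      eulerian 1 (2 * (q + 2) + 1) - eulerian (-1) (2 * (q + 2) + 1) ∈ cone (q + 2) := by
  have hD : eulerian (-1) (2 * (q + 2) + 1) = ((1 + X) ^ 2 - 4 * X) ^ (q + 2) := by
    rw [eulerian_neg_one, pow_mul]
    congr 1
    ring
  have h := eulerian_sub_mem q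
  have hp := cone_pow_add_sub (d := 1) (a := (1 + X) ^ 2 + 4 * X) (b := (1 + X) ^ 2 - 4 * X)
    (by convert add_mem cone_one_sq cone_one_sq using 1; ring)
    (by convert add_mem cone_one_X cone_one_X using 1; ring) (q + 2)
  rw [one_mul] at hp
  rw [hD]
  constructor
  · convert add_mem h hp.1 using 1; ring
  · convert add_mem h hp.2 using 1; ring

/-! ### Permutations preserving residues -/

/-- The permutation of `{0, …, m * k - 1}` acting on the residue class of `j` mod `k` by `σ j`. -/
def glue {m k : ℕ} (σ : Fin k → Equiv.Perm (Fin m)) : Equiv.Perm (Fin (m * k)) :=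
  finProdFinEquiv.permCongr (Equiv.prodCongrLeft σ)

lemma glue_apply {m k : ℕ} (σ : Fin k → Equiv.Perm (Fin m)) (a : Fin m) (j : Fin k) :
    glue σ (finProdFinEquiv (a, j)) = finProdFinEquiv (σ j a, j) := by
  simp [glue, Equiv.permCongr_apply]

lemma sign_glue {m k : ℕ} (σ : Fin k → Equiv.Perm (Fin m)) :
    Equiv.Perm.sign (glue σ) = ∏ j, Equiv.Perm.sign (σ j) := by
  rw [glue, Equiv.Perm.sign_permCongr, Equiv.Perm.sign_prodCongrLeft]

lemma exc_glue {m k : ℕ} (σ : Fin k → Equiv.Perm (Fin m)) :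
    exc (glue σ) = ∑ j, exc (σ j) := by
  unfold exc
  simp only [Finset.card_filter]
  rw [← Equiv.sum_comp finProdFinEquiv, Fintype.sum_prod_type_right]
  refine Finset.sum_congr rfl fun j _ => Finset.sum_congr rfl fun a _ => ?_
  rw [glue_apply]
  have hk : 0 < k := j.pos
  have : finProdFinEquiv (σ j a, j) > finProdFinEquiv (a, j) ↔ σ j a > a := by
    simp only [gt_iff_lt, Fin.lt_def, finProdFinEquiv_apply_val]
    constructor
    · intro h; exact lt_of_mul_lt_mul_left (by omega : k * (a : ℕ) < k * (σ j a : ℕ)) (by omega)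
    · intro h; have := Nat.mul_lt_mul_of_pos_left h hk; omega
  simp only [this]

lemma glue_injective {m k : ℕ} :
    Function.Injective (glue : (Fin k → Equiv.Perm (Fin m)) → _) := by
  intro σ τ h
  funext j
  ext a
  have := glue_apply σ a j
  rw [h, glue_apply] at this
  simpa using congrArg (fun x : Fin m × Fin k => (x.1 : ℕ)) (finProdFinEquiv.injective this).symm

lemma image_glue (m k : ℕ) :
    Finset.univ.image (glue : (Fin k → Equiv.Perm (Fin m)) → _) = MP (m * k) k 1 := by
  ext π
  simp only [MP, Finset.mem_image, Finset.mem_univ, true_and, Finset.mem_filter]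
  constructor
  · rintro ⟨σ, rfl⟩ i
    obtain ⟨⟨a, j⟩, rfl⟩ := finProdFinEquiv.surjective i
    rw [glue_apply]
    simp only [finProdFinEquiv_apply_val]
    refine (Int.modEq_iff_dvd.2 ⟨(a : ℤ) - σ j a, ?_⟩)
    push_cast
    ring
  · intro h
    have key : ∀ (a : Fin m) (j : Fin k), ∃ b : Fin m,
        π (finProdFinEquiv (a, j)) = finProdFinEquiv (b, j) := by
      intro a j
      obtain ⟨⟨b, l⟩, hb⟩ := finProdFinEquiv.surjective (π (finProdFinEquiv (a, j)))
      refine ⟨b, ?_⟩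
      have h1 := h (finProdFinEquiv (a, j))
      rw [← hb] at h1 ⊢
      simp only [finProdFinEquiv_apply_val] at h1
      obtain ⟨c, hc⟩ := Int.modEq_iff_dvd.1 h1
      push_cast at hc
      have h2 : (l : ℤ) ≡ (j : ℤ) [ZMOD k] := Int.modEq_iff_dvd.2 ⟨c + b - a, by linarith⟩
      have h3 : (l : ℕ) = j :=
        Nat.ModEq.eq_of_lt_of_lt (Int.natCast_modEq_iff.1 h2) l.isLt j.isLt
      rw [Fin.ext h3]
    choose s hs using key
    have inj : ∀ j, Function.Injective (fun a => s a j) := by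
      intro j a b hab
      have : π (finProdFinEquiv (a, j)) = π (finProdFinEquiv (b, j)) := by
        rw [hs, hs]; exact congrArg (fun x => finProdFinEquiv (x, j)) hab
      simpa using this
    refine ⟨fun j => Equiv.ofBijective _ (Finite.injective_iff_bijective.1 (inj j)), ?_⟩
    ext i
    obtain ⟨⟨a, j⟩, rfl⟩ := finProdFinEquiv.surjective i
    rw [glue_apply, hs]
    rfl

/-- `∑_{π ∈ MP} χ(sgn π) t ^ exc π = (∑_{σ ∈ S_m} χ(sgn σ) t ^ exc σ) ^ k`. -/
lemma sum_MP (ε : ℤˣ) (m k : ℕ) :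
    ∑ π ∈ MP (m * k) k 1, (if Equiv.Perm.sign π = 1 then 1 else ((ε : ℤ) : ℚ[X])) * X ^ exc π =
      eulerian ε m ^ k := by
  have hε : ((ε : ℤ) : ℚ[X]) * ((ε : ℤ) : ℚ[X]) = 1 := by
    rcases Int.units_eq_one_or ε with rfl | rfl <;> simp
  let χ : ℤˣ →* ℚ[X] :=
    { toFun := fun s => if s = 1 then 1 else ((ε : ℤ) : ℚ[X])
      map_one' := by simp
      map_mul' := by
        intro s t
        rcases Int.units_eq_one_or s with rfl | rfl <;>
          rcases Int.units_eq_one_or t with rfl | rfl <;> simp [hε] }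
  rw [← image_glue, Finset.sum_image (fun _ _ _ _ h => glue_injective h), eulerian,
    Fintype.sum_pow]
  refine Finset.sum_congr rfl fun σ _ => ?_
  rw [Finset.prod_mul_distrib, Finset.prod_pow_eq_pow_sum, exc_glue, sign_glue]
  congr 1
  exact map_prod χ _ _

theorem stmt5 (n k : ℕ) (hn : 0 < n) (hk : 0 < k) (hmod : n % (2 * k) = k) (hge : 5 * k ≤ n) :
    GammaPositive (∑ π ∈ (MP n k 1).filter (fun π => Equiv.Perm.sign π = 1), X ^ exc π)
      (((n : ℚ) - k) / 2) ∧
    GammaPositive (∑ π ∈ (MP n k 1).filter (fun π => Equiv.Perm.sign π = -1), X ^ exc π)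
      (((n : ℚ) - k) / 2) := by
  obtain ⟨q, rfl⟩ : ∃ q, n = (2 * (q + 2) + 1) * k := by
    have h1 := Nat.mod_add_div n (2 * k)
    rw [hmod] at h1
    have h2 : 2 ≤ n / (2 * k) := by
      by_contra! h
      have : 2 * k * (n / (2 * k)) ≤ 2 * k * 1 := Nat.mul_le_mul_left _ (by omega)
      omega
    obtain ⟨q, hq⟩ := Nat.exists_eq_add_of_le' h2
    refine ⟨q, ?_⟩
    rw [hq] at h1
    rw [← h1]
    ring
  have hc : (((((2 * (q + 2) + 1) * k : ℕ) : ℚ) - k) / 2) = (((q + 2) * k : ℕ) : ℚ) := by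
    push_cast
    ring
  rw [hc]
  obtain ⟨ha, hs⟩ := eulerian_add_sub_mem q
  obtain ⟨h1, h2⟩ := cone_pow_add_sub ha hs k
  have hC : (C (1 / 2 : ℚ) : ℚ[X]) * 2 = 1 := by
    rw [show (2 : ℚ[X]) = C 2 from rfl, ← C_mul]; norm_num
  have half : (C (1 / 2 : ℚ) : ℚ[X]) + C (1 / 2 : ℚ) = 1 := by linear_combination hC
  constructor
  · apply cone_gammaPositive
    convert cone_smul (1 / 2) (by norm_num) h1 using 1
    rw [← sum_MP, ← sum_MP, ← Finset.sum_add_distrib, Finset.smul_sum, Finset.sum_filter]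
    refine Finset.sum_congr rfl fun π _ => ?_
    rcases Int.units_eq_one_or (Equiv.Perm.sign π) with h | h
    · simp only [h, if_true, smul_eq_C_mul]
      linear_combination (-X ^ exc π) * half
    · simp [h]
  · apply cone_gammaPositive
    convert cone_smul (1 / 2) (by norm_num) h2 using 1
    rw [← sum_MP, ← sum_MP, ← Finset.sum_sub_distrib, Finset.smul_sum, Finset.sum_filter]
    refine Finset.sum_congr rfl fun π _ => ?_
    rcases Int.units_eq_one_or (Equiv.Perm.sign π) with h | h
    · simp [h]
    · simp only [h, if_true, smul_eq_C_mul]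
      rw [if_neg (by decide : (-1 : ℤˣ) ≠ 1), if_neg (by decide : (-1 : ℤˣ) ≠ 1)]
      simp only [Units.val_neg, Units.val_one, Int.cast_neg, Int.cast_one]
      linear_combination (-X ^ exc π) * half
end

section
/- Let k and m be positive integers, let n = mk, and let r be an integer with 2 ≤ r ≤ k. Then ∑_{π ∈ MP_{n,r}^k} t^{exc(π)} = t^{k+1-r} · A_m(t)^k as polynomials in ℚ[t]. -/
/-!
Write `i = c + k * a` with residue `c < k` and quotient `a < m`. A permutation in `MP (m * k) k r`
shifts the residues cyclically by `r - 1`, `c ↦ s c`, and acts on the quotients of each residue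
class by an arbitrary permutation `f c` of `Fin m`; see `assemble`. For `r ≥ 2`, the shift
increases the residue for the `k + 1 - r` classes with `c + (r - 1) < k`, where `i` is an excedance
iff `a ≤ f c a`, and decreases it for the others, where `i` is an excedance iff `a < f c a`. So the
generating function is the product of `k + 1 - r` copies of `∑ t ^ wexc` and `r - 1` copies of
`∑ t ^ exc` over `S_m`.

Composition with the cyclic shift of `Fin m` shows `∑ t ^ wexc = t * ∑ t ^ exc` (`wexc_eq`), and
`∑ t ^ exc = ∑ t ^ des = A_m` because both statistics satisfy the same recurrence on `m`: inserting
a new maximum, into the cycles (`cycIns`) respectively into the word (`wordIns`), the statistic `d`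
is kept in `d + 1` of the `m + 1` ways and increased by one in the other `m - d` ways.
-/

open Polynomial Finset

/-- Number of descents of a permutation of `Fin n`: indices `i` with `i + 1 < n` and
`π (i+1) < π i`. -/
def des {n : ℕ} (π : Equiv.Perm (Fin n)) : ℕ :=
  (Finset.univ.filter fun i : Fin n =>
    (i : ℕ) + 1 < n ∧ π ⟨((i : ℕ) + 1) % n, Nat.mod_lt _ i.pos⟩ < π i).card

/-- The Eulerian polynomial `A_m(t) = ∑_{π ∈ S_m} t^(des π)`. -/
noncomputable def Eulerian (m : ℕ) : ℚ[X] :=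
  ∑ π : Equiv.Perm (Fin m), X ^ des π

/-! ### Excedances and descents are equidistributed -/

/-- Number of weak excedances of a permutation of `Fin n` (indices where `i ≤ π i`). -/
def wexc {n : ℕ} (π : Equiv.Perm (Fin n)) : ℕ :=
  (Finset.univ.filter fun i => i ≤ π i).card

/-- Replacing `S` by `insert j S` keeps the size for the `#S` elements `j` of `S`, and
increases it by one for the `m - #S` others. -/
theorem sum_card_insert {m : ℕ} (S : Finset (Fin m)) (F : ℕ → ℚ[X]) :
    ∑ j, F (insert j S).card = S.card * F S.card + ((m : ℚ[X]) - S.card) * F (S.card + 1) := by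
  rw [← Finset.sum_add_sum_compl S]
  have h1 : ∑ j ∈ S, F (insert j S).card = ∑ j ∈ S, F S.card :=
    Finset.sum_congr rfl fun j hj => by rw [Finset.insert_eq_of_mem hj]
  have h2 : ∑ j ∈ Sᶜ, F (insert j S).card = ∑ j ∈ Sᶜ, F (S.card + 1) :=
    Finset.sum_congr rfl fun j hj => by
      rw [Finset.card_insert_of_notMem (Finset.mem_compl.1 hj)]
  have hS : S.card ≤ m := by simpa using Finset.card_le_univ S
  rw [h1, h2]
  simp [Finset.card_compl, Nat.cast_sub hS]

/-- Insertion of the new maximal point into the cycle structure of `π`, right after `p` (as a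
fixed point if `p` is the new point itself). -/
def cycIns {m : ℕ} (x : Fin (m + 1) × Equiv.Perm (Fin m)) : Equiv.Perm (Fin (m + 1)) :=
  Equiv.swap x.1 (Fin.last m) |>.trans
    (finSuccEquivLast.trans ((Equiv.optionCongr x.2).trans finSuccEquivLast.symm))

/-- Insertion of the new maximal letter at position `p` of the word of `π`. -/
def wordIns {m : ℕ} (x : Fin (m + 1) × Equiv.Perm (Fin m)) : Equiv.Perm (Fin (m + 1)) :=
  (finSuccEquiv' x.1).trans ((Equiv.optionCongr x.2).trans finSuccEquivLast.symm)

theorem wordIns_self {m : ℕ} (p : Fin (m + 1)) (π : Equiv.Perm (Fin m)) :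
    wordIns (p, π) p = Fin.last m := by
  simp [wordIns]

theorem wordIns_succAbove {m : ℕ} (p : Fin (m + 1)) (π : Equiv.Perm (Fin m)) (i : Fin m) :
    wordIns (p, π) (p.succAbove i) = (π i).castSucc := by
  simp [wordIns]

theorem cycIns_last {m : ℕ} (π : Equiv.Perm (Fin m)) (i : Fin m) :
    cycIns (Fin.last m, π) i.castSucc = (π i).castSucc := by
  simp [cycIns]

theorem cycIns_self {m : ℕ} (p : Fin (m + 1)) (π : Equiv.Perm (Fin m)) :
    cycIns (p, π) p = Fin.last m := by
  simp [cycIns]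

theorem cycIns_of_ne {m : ℕ} (j : Fin m) (π : Equiv.Perm (Fin m)) (i : Fin m) (h : i ≠ j) :
    cycIns (j.castSucc, π) i.castSucc = (π i).castSucc := by
  have : Equiv.swap j.castSucc (Fin.last m) i.castSucc = i.castSucc :=
    Equiv.swap_apply_of_ne_of_ne (by simpa using h) (Fin.castSucc_lt_last i).ne
  simp [cycIns, this]

theorem wordIns_bijective (m : ℕ) : Function.Bijective (wordIns (m := m)) := by
  rw [Fintype.bijective_iff_injective_and_card]
  constructor
  · rintro ⟨p, π⟩ ⟨q, ρ⟩ h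
    have hp : p = q := by
      apply (wordIns (q, ρ)).injective
      rw [wordIns_self, ← h, wordIns_self]
    subst hp
    congr 1
    ext1 i
    have := wordIns_succAbove p π i
    rw [h, wordIns_succAbove] at this
    exact (Fin.castSucc_injective _ this).symm
  · simp [Fintype.card_perm, Nat.factorial_succ]

theorem cycIns_bijective (m : ℕ) : Function.Bijective (cycIns (m := m)) := by
  rw [Fintype.bijective_iff_injective_and_card]
  constructor
  · rintro ⟨p, π⟩ ⟨q, ρ⟩ h
    have hp : p = q := by
      apply (cycIns (q, ρ)).injective
      rw [cycIns_self, ← h, cycIns_self]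
    subst hp
    congr 1
    ext1 i
    have := congrArg (fun σ : Equiv.Perm (Fin (m + 1)) =>
      σ (Equiv.swap p (Fin.last m) i.castSucc)) h
    simpa [cycIns] using this
  · simp [Fintype.card_perm, Nat.factorial_succ]

theorem exc_cycIns_last {m : ℕ} (π : Equiv.Perm (Fin m)) :
    exc (cycIns (Fin.last m, π)) = exc π := by
  unfold exc
  rw [Fin.univ_castSuccEmb, Finset.filter_cons_of_neg _ _ _ _ (by simp [cycIns_self]),
    Finset.filter_map, Finset.card_map]
  congr 1
  ext i
  simp [cycIns_last]

/-- Inserting the maximal point after `j` makes `j` an excedance and leaves the other old points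
alone; the new point is not an excedance. -/
theorem exc_cycIns_castSucc {m : ℕ} (j : Fin m) (π : Equiv.Perm (Fin m)) :
    exc (cycIns (j.castSucc, π)) = (insert j (univ.filter fun i => π i > i)).card := by
  unfold exc
  rw [Fin.univ_castSuccEmb, Finset.filter_cons_of_neg _ _ _ _ (by simp [Fin.le_last]),
    Finset.filter_map, Finset.card_map]
  congr 1
  ext i
  by_cases h : i = j
  · subst h
    simp [cycIns_self, Fin.castSucc_lt_last]
  · simp [cycIns_of_ne _ _ _ h, h]

/-- Of the `m + 1` insertions into `π`, exactly `exc π + 1` keep the number of excedances and the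
others increase it by one. -/
theorem sum_exc_succ (m : ℕ) (F : ℕ → ℚ[X]) :
    ∑ π : Equiv.Perm (Fin (m + 1)), F (exc π) =
      ∑ π : Equiv.Perm (Fin m),
        (((exc π : ℚ[X]) + 1) * F (exc π) + ((m : ℚ[X]) - exc π) * F (exc π + 1)) := by
  rw [← (cycIns_bijective m).sum_comp (fun σ => F (exc σ)), Fintype.sum_prod_type_right]
  refine Finset.sum_congr rfl fun π _ => ?_
  rw [Fin.sum_univ_castSucc]
  simp_rw [exc_cycIns_castSucc, exc_cycIns_last]
  rw [sum_card_insert]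
  unfold exc
  ring

theorem des_succ {m : ℕ} (π : Equiv.Perm (Fin (m + 1))) :
    des π = (univ.filter fun i : Fin m => π i.succ < π i.castSucc).card := by
  unfold des
  rw [Fin.univ_castSuccEmb, Finset.filter_cons_of_neg _ _ _ _ (by simp),
    Finset.filter_map, Finset.card_map]
  congr 1
  ext i
  have : (⟨((i : ℕ) + 1) % (m + 1), Nat.mod_lt _ (Nat.succ_pos _)⟩ : Fin (m + 1)) = i.succ := by
    ext; simp [Nat.mod_eq_of_lt]
  simp [this]

/-- The set of descents, as a subset of `Fin (m + 1)`; the last index is never in it. -/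
def desSet {m : ℕ} (π : Equiv.Perm (Fin (m + 1))) : Finset (Fin (m + 1)) :=
  (univ.filter fun i : Fin m => π i.succ < π i.castSucc).map Fin.castSuccEmb

theorem card_desSet {m : ℕ} (π : Equiv.Perm (Fin (m + 1))) : (desSet π).card = des π := by
  rw [desSet, Finset.card_map, des_succ]

theorem des_wordIns_last {m : ℕ} (π : Equiv.Perm (Fin (m + 1))) :
    des (wordIns (Fin.last _, π)) = des π := by
  rw [des_succ, ← card_desSet]
  congr 1
  have key := wordIns_succAbove (Fin.last _) π
  simp only [Fin.succAbove_last] at key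
  ext i
  refine Fin.lastCases ?_ (fun j => ?_) i
  · simp [desSet, key, wordIns_self, Fin.le_last]
  · have := key j.succ
    rw [← Fin.succ_castSucc] at this
    simp [desSet, key, this]

/-- Inserting the maximal letter in front creates one new descent. Recording it as the insertion
of the non-descent `Fin.last m` makes this case look like `des_wordIns_succ`. -/
theorem des_wordIns_zero {m : ℕ} (π : Equiv.Perm (Fin (m + 1))) :
    des (wordIns (0, π)) = (insert (Fin.last m) (desSet π)).card := by
  have key := wordIns_succAbove 0 π
  simp only [Fin.succAbove_zero] at key
  have hs := wordIns_self 0 π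
  rw [Finset.card_insert_of_notMem (by simp [desSet]), des_succ, desSet, Finset.card_map,
    Fin.univ_succ, Finset.filter_cons_of_pos, Finset.card_cons, Finset.filter_map, Finset.card_map]
  · congr 2
    ext i
    simp [key]
  · have h1 := key 0
    rw [Fin.castSucc_zero, hs, h1]
    exact Fin.castSucc_lt_last _

/-- Inserting the maximal letter between the letters `j` and `j + 1` replaces the adjacency there
by an ascent followed by a descent, so afterwards it counts as a descent in any case. -/
theorem des_wordIns_succ {m : ℕ} (j : Fin m) (π : Equiv.Perm (Fin (m + 1))) :
    des (wordIns (j.succ.castSucc, π)) = (insert j.castSucc (desSet π)).card := by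
  have key := wordIns_succAbove j.succ.castSucc π
  have hs := wordIns_self j.succ.castSucc π
  have h1 : ∀ i, i ≠ j →
      wordIns (j.succ.castSucc, π) (j.succ.succAbove i).succ = (π i.succ).castSucc := by
    intro i hi
    rw [← key]
    congr 1
    have : (i : ℕ) ≠ j := fun e => hi (Fin.ext e)
    ext
    simp only [Fin.succAbove, Fin.lt_def, Fin.val_castSucc, Fin.val_succ]
    split_ifs <;> simp <;> omega
  have h2 : ∀ i,
      wordIns (j.succ.castSucc, π) (j.succ.succAbove i).castSucc = (π i.castSucc).castSucc := by
    intro i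
    rw [← key]
    congr 1
    ext
    simp only [Fin.succAbove, Fin.lt_def, Fin.val_castSucc, Fin.val_succ]
    split_ifs <;> simp
  have h3 : wordIns (j.succ.castSucc, π) (j.succ.succAbove j).succ = Fin.last _ := by
    rw [← hs]
    congr 1
    simp
  have h4 : wordIns (j.succ.castSucc, π) j.succ.succ < Fin.last _ := by
    have := key j.succ
    rw [Fin.succAbove_castSucc_self] at this
    rw [this]
    exact Fin.castSucc_lt_last _
  -- Adjacencies of the new word: `j.succ` is a descent, `j.succ.succAbove j` is an ascent, and
  -- `j.succ.succAbove i` for `i ≠ j` is the old adjacency `i`.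
  have e : insert j.castSucc (desSet π) = (insert j
      (univ.filter fun i : Fin m => π i.succ < π i.castSucc)).map Fin.castSuccEmb := by
    simp [desSet, Finset.map_insert]
  rw [e, Finset.card_map, des_succ, Fin.univ_succAbove _ j.succ,
    Finset.filter_cons_of_pos _ _ _ _ (by rw [hs]; exact h4), Finset.card_cons,
    Finset.filter_map, Finset.card_map, ← Finset.insert_erase (Finset.mem_insert_self j _),
    Finset.card_insert_of_notMem (Finset.notMem_erase _ _)]
  congr 2
  ext i
  by_cases hi : i = j
  · subst hi
    rw [Finset.mem_filter, Function.comp_apply, Fin.coe_succAboveEmb, h3]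
    simp [Fin.le_last]
  · rw [Finset.mem_filter, Function.comp_apply, Fin.coe_succAboveEmb, h1 i hi, h2]
    simp [hi]

/-- The recurrence of `sum_exc_succ`, for descents of words. -/
theorem sum_des_succ (m : ℕ) (F : ℕ → ℚ[X]) :
    ∑ π : Equiv.Perm (Fin (m + 2)), F (des π) =
      ∑ π : Equiv.Perm (Fin (m + 1)),
        (((des π : ℚ[X]) + 1) * F (des π) + (((m + 1 : ℕ) : ℚ[X]) - des π) * F (des π + 1)) := by
  rw [← (wordIns_bijective (m + 1)).sum_comp (fun σ => F (des σ)), Fintype.sum_prod_type_right]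
  refine Finset.sum_congr rfl fun π _ => ?_
  have h := sum_card_insert (desSet π) F
  rw [Fin.sum_univ_castSucc] at h
  rw [Fin.sum_univ_castSucc, Fin.sum_univ_succ]
  simp_rw [des_wordIns_succ, des_wordIns_last, Fin.castSucc_zero, des_wordIns_zero]
  rw [card_desSet] at h
  linear_combination h

/-- Quantifying over all `F` lets the recurrence be absorbed into `F`. -/
theorem sum_exc_eq_sum_des (m : ℕ) : ∀ F : ℕ → ℚ[X],
    ∑ π : Equiv.Perm (Fin (m + 1)), F (exc π) = ∑ π : Equiv.Perm (Fin (m + 1)), F (des π) := by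
  induction m with
  | zero =>
    intro F
    refine Finset.sum_congr rfl fun π _ => ?_
    have : π = 1 := Subsingleton.elim (α := Equiv.Perm (Fin 1)) _ _
    simp [this, des_succ, exc]
  | succ m ih =>
    intro F
    rw [sum_exc_succ, sum_des_succ]
    exact ih fun s => ((s : ℚ[X]) + 1) * F s + (((m + 1 : ℕ) : ℚ[X]) - s) * F (s + 1)

/-- Following `π` by the cyclic shift `i ↦ i + 1` turns weak excedances into excedances, except
for the position of the maximal value, whose new value is `0`. -/
theorem wexc_eq {m : ℕ} (π : Equiv.Perm (Fin (m + 1))) :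
    wexc π = exc (π.trans (finRotate (m + 1))) + 1 := by
  have : (univ.filter fun i => i ≤ π i) =
      insert (π.symm (Fin.last m)) (univ.filter fun i => π.trans (finRotate (m + 1)) i > i) := by
    ext i
    by_cases h : π i = Fin.last m
    · have h' : i = π.symm (Fin.last m) := by rw [← h, Equiv.symm_apply_apply]
      simp only [mem_filter, mem_univ, true_and, mem_insert, h', true_or,
        Equiv.apply_symm_apply, Fin.le_last]
    · have h' : i ≠ π.symm (Fin.last m) := fun e => h (by simp [e])
      have h2 : (π i : ℕ) < m := by
        have := Fin.val_lt_last h; simpa using this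
      simp only [mem_filter, mem_univ, true_and, mem_insert, h', false_or, Equiv.trans_apply,
        gt_iff_lt, Fin.lt_def, Fin.le_def, coe_finRotate_of_ne_last h]
      omega
  rw [wexc, this, Finset.card_insert_of_notMem (by simp), exc]

theorem sum_X_pow_exc (m : ℕ) (hm : 0 < m) :
    ∑ σ : Equiv.Perm (Fin m), (X : ℚ[X]) ^ exc σ = Eulerian m := by
  obtain ⟨m, rfl⟩ := Nat.exists_eq_add_one.2 hm
  exact sum_exc_eq_sum_des m fun s => X ^ s

theorem sum_X_pow_wexc (m : ℕ) (hm : 0 < m) :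
    ∑ σ : Equiv.Perm (Fin m), (X : ℚ[X]) ^ wexc σ = X * Eulerian m := by
  rw [← sum_X_pow_exc m hm]
  obtain ⟨m, rfl⟩ := Nat.exists_eq_add_one.2 hm
  have h := Equiv.sum_comp (Equiv.mulLeft (finRotate (m + 1))) (fun σ => (X : ℚ[X]) ^ exc σ)
  rw [← h, Finset.mul_sum]
  refine Finset.sum_congr rfl fun σ _ => ?_
  rw [wexc_eq, pow_succ']
  rfl

/-! ### Splitting into residue classes -/

/-- The permutation of `Fin (m * k)` that sends `c + k * a` to `s c + k * f c a`, where
`c < k` is the residue and `a < m` the quotient. -/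
def assemble {m k : ℕ} (s : Equiv.Perm (Fin k)) (f : Fin k → Equiv.Perm (Fin m)) :
    Equiv.Perm (Fin (m * k)) :=
  ((Equiv.prodComm _ _).trans finProdFinEquiv).permCongr (Equiv.prodShear s f)

theorem assemble_apply {m k : ℕ} (s : Equiv.Perm (Fin k)) (f : Fin k → Equiv.Perm (Fin m))
    (a : Fin m) (c : Fin k) :
    assemble s f (finProdFinEquiv (a, c)) = finProdFinEquiv (f c a, s c) := by
  simp [assemble, Equiv.permCongr_apply]

theorem assemble_injective {m k : ℕ} (s : Equiv.Perm (Fin k)) :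
    Function.Injective (assemble (m := m) s) := by
  intro f g h
  ext1 c
  ext1 a
  have := assemble_apply s f a c
  rw [h, assemble_apply] at this
  exact ((Prod.ext_iff.1 (finProdFinEquiv.injective this)).1).symm

theorem exists_assemble {m k : ℕ} (s : Equiv.Perm (Fin k)) (π : Equiv.Perm (Fin (m * k)))
    (h : ∀ a c, (finProdFinEquiv.symm (π (finProdFinEquiv (a, c)))).2 = s c) :
    ∃ f, assemble s f = π := by
  have hinj : ∀ c, Function.Bijective
      fun a => (finProdFinEquiv.symm (π (finProdFinEquiv (a, c)))).1 := by
    intro c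
    rw [← Finite.injective_iff_bijective]
    intro a b hab
    have : finProdFinEquiv.symm (π (finProdFinEquiv (a, c))) =
        finProdFinEquiv.symm (π (finProdFinEquiv (b, c))) :=
      Prod.ext hab ((h a c).trans (h b c).symm)
    have := finProdFinEquiv.injective (π.injective (finProdFinEquiv.symm.injective this))
    exact (Prod.ext_iff.1 this).1
  refine ⟨fun c => Equiv.ofBijective _ (hinj c), ?_⟩
  ext1 x
  obtain ⟨⟨a, c⟩, rfl⟩ := finProdFinEquiv.surjective x
  rw [assemble_apply, ← Equiv.eq_symm_apply]
  exact Prod.ext rfl (h a c).symm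

/-- Within the residue class `c`, excedances are weak excedances of `f c` if `c < s c`, and
excedances of `f c` otherwise. -/
theorem exc_assemble {m k : ℕ} (s : Equiv.Perm (Fin k)) (f : Fin k → Equiv.Perm (Fin m)) :
    exc (assemble s f) = ∑ c, if c < s c then wexc (f c) else exc (f c) := by
  unfold exc wexc
  rw [Finset.card_filter, ← finProdFinEquiv.sum_comp, Fintype.sum_prod_type_right]
  refine Finset.sum_congr rfl fun c _ => ?_
  have key : ∀ a, assemble s f (finProdFinEquiv (a, c)) > finProdFinEquiv (a, c) ↔
      if c < s c then a ≤ f c a else f c a > a := by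
    intro a
    have hc := c.2
    have hsc := (s c).2
    rw [assemble_apply, gt_iff_lt, Fin.lt_def]
    simp only [finProdFinEquiv_apply_val, gt_iff_lt, Fin.lt_def, Fin.le_def]
    rcases lt_trichotomy (a : ℕ) (f c a) with h | h | h
    · have := Nat.mul_le_mul_left k (Nat.succ_le_of_lt h)
      rw [Nat.mul_succ] at this
      split_ifs <;> omega
    · rw [← h]
      split_ifs <;> omega
    · have := Nat.mul_le_mul_left k (Nat.succ_le_of_lt h)
      rw [Nat.mul_succ] at this
      split_ifs <;> omega
  simp_rw [key]
  rw [← Finset.card_filter]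
  split_ifs <;> rfl

theorem sum_assemble {m k : ℕ} (hm : 0 < m) (s : Equiv.Perm (Fin k)) :
    ∑ f : Fin k → Equiv.Perm (Fin m), (X : ℚ[X]) ^ exc (assemble s f) =
      X ^ (univ.filter fun c => c < s c).card * Eulerian m ^ k := by
  have h : ∀ c, ∑ σ : Equiv.Perm (Fin m), (X : ℚ[X]) ^ (if c < s c then wexc σ else exc σ) =
      (if c < s c then X else 1) * Eulerian m := by
    intro c
    split_ifs
    · exact sum_X_pow_wexc m hm
    · rw [sum_X_pow_exc m hm, one_mul]
  simp_rw [exc_assemble, ← Finset.prod_pow_eq_pow_sum]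
  rw [← Fintype.prod_sum (fun c (σ : Equiv.Perm (Fin m)) =>
    (X : ℚ[X]) ^ (if c < s c then wexc σ else exc σ))]
  simp_rw [h, Finset.prod_mul_distrib, Finset.prod_ite]
  simp

theorem stmt11 (k m r : ℕ) (hk : 0 < k) (hm : 0 < m) (n : ℕ) (hn : n = m * k)
    (hr1 : 2 ≤ r) (hr2 : r ≤ k) :
    ∑ π ∈ MP n k r, (X : ℚ[X]) ^ exc π = X ^ (k + 1 - r) * (Eulerian m) ^ k := by
  subst hn
  have : NeZero k := ⟨hk.ne'⟩
  obtain ⟨s, hs⟩ : ∃ s : Equiv.Perm (Fin k), ∀ c, (s c : ℕ) = (c + (r - 1)) % k :=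
    ⟨Equiv.addRight ⟨r - 1, by omega⟩, fun c => by simp [Fin.val_add]⟩
  -- Since `1 ≤ r - 1 < k`, the shift `s` of the residues moves the first `k + 1 - r` of them up
  -- and the others down.
  have hval : ∀ c, (s c : ℕ) = if (c : ℕ) < k + 1 - r then c + (r - 1) else c + (r - 1) - k := by
    intro c
    have := c.2
    rw [hs]
    split_ifs with h
    · exact Nat.mod_eq_of_lt (by omega)
    · rw [Nat.mod_eq_sub_mod (by omega), Nat.mod_eq_of_lt (by omega)]
  have hcard : (univ.filter fun c => c < s c).card = k + 1 - r := by
    have : (univ.filter fun c => c < s c) = univ.filter fun c : Fin k => (c : ℕ) < k + 1 - r := by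
      ext c
      simp only [mem_filter, mem_univ, true_and, Fin.lt_def, hval]
      split_ifs <;> omega
    rw [this, Fin.card_filter_val_lt]
    omega
  have hmem : ∀ π : Equiv.Perm (Fin (m * k)), π ∈ MP (m * k) k r ↔
      ∀ a c, (finProdFinEquiv.symm (π (finProdFinEquiv (a, c)))).2 = s c := by
    intro π
    rw [MP, mem_filter]
    simp only [mem_univ, true_and]
    rw [← finProdFinEquiv.forall_congr_right, Prod.forall]
    refine forall₂_congr fun a c => ?_
    have e : ((r : ℤ) - 1) = ((r - 1 : ℕ) : ℤ) := by omega
    obtain ⟨⟨b, d⟩, hb⟩ := finProdFinEquiv.surjective (π (finProdFinEquiv (a, c)))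
    rw [← hb, Equiv.symm_apply_apply, Fin.ext_iff, hs, e]
    simp only [finProdFinEquiv_apply_val]
    have hd : (d : ℕ) = (c + (r - 1)) % k ↔ d ≡ c + (r - 1) [MOD k] := by
      rw [Nat.ModEq, Nat.mod_eq_of_lt d.2]
    rw [hd, ← Int.natCast_modEq_iff, Int.modEq_iff_dvd, Int.modEq_iff_dvd]
    push_cast
    -- Multiples of `k` coming from the quotients `a`, `b` do not affect the congruence.
    rw [← dvd_add_left (a := (k : ℤ)) (b := _) (c := (k : ℤ) * ((b : ℤ) - a)) (dvd_mul_right _ _)]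
    ring_nf
  rw [← hcard, ← sum_assemble hm s]
  symm
  refine Finset.sum_bij (fun f _ => assemble s f) ?_ ?_ ?_ ?_
  · intro f _
    rw [hmem]
    intro a c
    rw [assemble_apply, Equiv.symm_apply_apply]
  · intro f _ g _ h
    exact assemble_injective s h
  · intro π hπ
    obtain ⟨f, hf⟩ := exists_assemble s π ((hmem π).1 hπ)
    exact ⟨f, mem_univ _, hf⟩
  · intro f _
    rfl
end
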